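/- Let G be a group, r a natural number, and let S, S' : Fin r → G be two tuples whose images each generate G. Let φ_{S'} : FreeGroup (Fin r) → G denote the group homomorphism determined by sending the i-th free generator to S' i. Then S and S' are Nielsen equivalent if and only if there exists a tuple T : Fin r → FreeGroup (Fin r) which is a free basis of FreeGroup (Fin r) (i.e. the homomorphism FreeGroup (Fin r) → FreeGroup (Fin r) induced by T is an isomorphism) such that S i = φ_{S'} (T i) for every i. -/

import Mathlib

/-- An elementary Nielsen move on ordered `r`-tuples of elements of a group `G`:
inversion of one entry, permutation (swap) of two entries, or a twist replacing
`g_i` by `g_i * g_j` for some `j ≠ i`, all other entries being kept fixed. -/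
def NielsenMove {G : Type*} [Group G] {r : ℕ} (S S' : Fin r → G) : Prop :=
  (∃ i, S' i = (S i)⁻¹ ∧ ∀ k, k ≠ i → S' k = S k) ∨
  (∃ i j, i ≠ j ∧ S' i = S j ∧ S' j = S i ∧ ∀ k, k ≠ i → k ≠ j → S' k = S k) ∨
  (∃ i j, j ≠ i ∧ S' i = S i * S j ∧ ∀ k, k ≠ i → S' k = S k)

/-- Two tuples are Nielsen equivalent if they lie in the same class of the equivalence
relation generated by the elementary Nielsen moves. -/
def NielsenEquiv {G : Type*} [Group G] {r : ℕ} (S S' : Fin r → G) : Prop :=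
  Relation.EqvGen NielsenMove S S'

/-!
If `S` and `S'` differ by a Nielsen move, then `φ_S` and `φ_{S'}` differ by an automorphism of the
free group, hence so they do if `S` and `S'` are Nielsen equivalent. For the converse it suffices,
by applying `φ_{S'}`, to show that every generating `r`-tuple of the free group `F` of rank `r` is
Nielsen equivalent to the standard basis.

This is Nielsen's cancellation argument. Order the elements of `F` by length, with ties broken
lexicographically, and replace the tuple by a Nielsen equivalent one of minimal total complexity.
Then no entry loses more than half of its letters in a product with another one, and if it loses
exactly half of them on either side, the tie-breaking forces its two halves to be mutually inverse,
so that it is trivial. Hence in every product of entries and their inverses without trivially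
cancelling neighbours some letter of each factor survives. Such a product has length one only if it
consists of a single factor, so all the standard generators occur in the tuple up to inversion.
-/

section Moves

variable {G : Type*} [Group G] {r : ℕ}

theorem NielsenMove.exists_mulEquiv {S S' : Fin r → G} (h : NielsenMove S S') :
    ∃ φ : FreeGroup (Fin r) ≃* FreeGroup (Fin r),
      FreeGroup.lift S' = (FreeGroup.lift S).comp φ := by
  suffices ∃ T T' : Fin r → FreeGroup (Fin r),
      (∀ k, FreeGroup.lift T' (T k) = FreeGroup.of k) ∧
      (∀ k, FreeGroup.lift T (T' k) = FreeGroup.of k) ∧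
      ∀ k, S' k = FreeGroup.lift S (T k) by
    obtain ⟨T, T', hT'T, hTT', hS'⟩ := this
    refine ⟨MonoidHom.toMulEquiv (FreeGroup.lift T) (FreeGroup.lift T') ?_ ?_, ?_⟩ <;>
      ext k <;> simp [hT'T, hTT', hS']
  rcases h with ⟨i, hi, hk⟩ | ⟨i, j, -, hi, hj, hk⟩ | ⟨i, j, hji, hi, hk⟩
  · let T := Function.update FreeGroup.of i (FreeGroup.of i)⁻¹
    have hT : ∀ k, FreeGroup.lift T (T k) = FreeGroup.of k := by
      intro k
      obtain rfl | hki := eq_or_ne k i <;> simp [T, *]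
    refine ⟨T, T, hT, hT, fun k => ?_⟩
    obtain rfl | hki := eq_or_ne k i <;> simp [T, *]
  · let T : Fin r → FreeGroup (Fin r) := FreeGroup.of ∘ Equiv.swap i j
    have hT : ∀ k, FreeGroup.lift T (T k) = FreeGroup.of k := by simp [T]
    refine ⟨T, T, hT, hT, fun k => ?_⟩
    obtain rfl | hki := eq_or_ne k i
    · simp [T, hi]
    obtain rfl | hkj := eq_or_ne k j
    · simp [T, hj]
    simp [T, Equiv.swap_apply_of_ne_of_ne hki hkj, hk k hki hkj]
  · refine ⟨Function.update FreeGroup.of i (FreeGroup.of i * FreeGroup.of j),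
      Function.update FreeGroup.of i (FreeGroup.of i * (FreeGroup.of j)⁻¹), ?_, ?_, ?_⟩ <;>
    · intro k
      obtain rfl | hki := eq_or_ne k i <;> simp [*]

theorem NielsenMove.map {H : Type*} [Group H] (f : G →* H) {S S' : Fin r → G}
    (h : NielsenMove S S') : NielsenMove (f ∘ S) (f ∘ S') := by
  rcases h with ⟨i, hi, hk⟩ | ⟨i, j, hij, hi, hj, hk⟩ | ⟨i, j, hji, hi, hk⟩
  · exact .inl ⟨i, by simp [hi], fun k hki => by simp [hk k hki]⟩
  · exact .inr (.inl ⟨i, j, hij, by simp [hi], by simp [hj],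
      fun k hki hkj => by simp [hk k hki hkj]⟩)
  · exact .inr (.inr ⟨i, j, hji, by simp [hi], fun k hki => by simp [hk k hki]⟩)

namespace NielsenEquiv

theorem refl (S : Fin r → G) : NielsenEquiv S S :=
  Relation.EqvGen.refl S

theorem symm {S S' : Fin r → G} (h : NielsenEquiv S S') : NielsenEquiv S' S :=
  Relation.EqvGen.symm S S' h

theorem trans {S S' S'' : Fin r → G} (h : NielsenEquiv S S') (h' : NielsenEquiv S' S'') :
    NielsenEquiv S S'' :=
  Relation.EqvGen.trans S S' S'' h h'

theorem of_move {S S' : Fin r → G} (h : NielsenMove S S') : NielsenEquiv S S' :=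
  Relation.EqvGen.rel S S' h

theorem map {H : Type*} [Group H] (f : G →* H) {S S' : Fin r → G} (h : NielsenEquiv S S') :
    NielsenEquiv (f ∘ S) (f ∘ S') := by
  induction h with
  | rel S S' h => exact of_move (h.map f)
  | refl S => exact refl _
  | symm S S' _ ih => exact ih.symm
  | trans S S' S'' _ _ ih ih' => exact ih.trans ih'

theorem exists_mulEquiv {S S' : Fin r → G} (h : NielsenEquiv S S') :
    ∃ φ : FreeGroup (Fin r) ≃* FreeGroup (Fin r),
      FreeGroup.lift S = (FreeGroup.lift S').comp φ := by
  have swap_sides {S S' : Fin r → G} (h : ∃ φ : FreeGroup (Fin r) ≃* FreeGroup (Fin r),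
      FreeGroup.lift S = (FreeGroup.lift S').comp φ) :
      ∃ φ : FreeGroup (Fin r) ≃* FreeGroup (Fin r),
        FreeGroup.lift S' = (FreeGroup.lift S).comp φ := by
    obtain ⟨φ, hφ⟩ := h
    exact ⟨φ.symm, by rw [hφ]; ext; simp⟩
  induction h with
  | rel S S' h => exact swap_sides h.exists_mulEquiv
  | refl S => exact ⟨MulEquiv.refl _, by ext; simp⟩
  | symm S S' _ ih => exact swap_sides ih
  | trans S S' S'' _ _ ih ih' =>
    obtain ⟨φ, hφ⟩ := ih
    obtain ⟨ψ, hψ⟩ := ih'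
    exact ⟨φ.trans ψ, by rw [hφ, hψ]; ext; simp⟩

theorem closure_range_eq {S S' : Fin r → G} (h : NielsenEquiv S S') :
    Subgroup.closure (Set.range S) = Subgroup.closure (Set.range S') := by
  obtain ⟨φ, hφ⟩ := h.exists_mulEquiv
  rw [← FreeGroup.range_lift_eq_closure, ← FreeGroup.range_lift_eq_closure, hφ,
    MonoidHom.range_comp, MonoidHom.range_eq_top.2 φ.surjective, ← MonoidHom.range_eq_map]

theorem update_inv (S : Fin r → G) (i : Fin r) (g : G) :
    NielsenEquiv (Function.update S i g) (Function.update S i g⁻¹) :=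
  of_move (.inl ⟨i, by simp, fun k hk => by simp [hk]⟩)

theorem update_mul_right (S : Fin r → G) {i j : Fin r} (hji : j ≠ i) {v : G}
    (hv : v = S j ∨ v = (S j)⁻¹) (g : G) :
    NielsenEquiv (Function.update S i g) (Function.update S i (g * v)) := by
  have twist (g : G) :
      NielsenEquiv (Function.update S i g) (Function.update S i (g * S j)) :=
    of_move (.inr (.inr ⟨i, j, hji, by simp [hji], fun k hk => by simp [hk]⟩))
  rcases hv with rfl | rfl
  · exact twist g
  · simpa using (twist (g * (S j)⁻¹)).symm

theorem update_mul_left (S : Fin r → G) {i j : Fin r} (hji : j ≠ i) {v : G}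
    (hv : v = S j ∨ v = (S j)⁻¹) (g : G) :
    NielsenEquiv (Function.update S i g) (Function.update S i (v * g)) := by
  have hv' : v⁻¹ = S j ∨ v⁻¹ = (S j)⁻¹ := by
    rcases hv with rfl | rfl <;> simp
  simpa using ((update_inv S i g).trans (update_mul_right S hji hv' g⁻¹)).trans
    (update_inv S i (g⁻¹ * v⁻¹))

theorem update_mul (S : Fin r → G) {i j : Fin r} (hji : j ≠ i) {v w : G}
    (hv : v = S j ∨ v = (S j)⁻¹) (hw : w = S i ∨ w = (S i)⁻¹) :
    NielsenEquiv S (Function.update S i (v * w)) := by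
  have hSw : NielsenEquiv S (Function.update S i w) := by
    rcases hw with rfl | rfl
    · simpa using refl S
    · simpa using update_inv S i (S i)
  exact hSw.trans (update_mul_left S hji hv w)

theorem of_forall_eq_or_eq_inv {S S' : Fin r → G} (h : ∀ i, S' i = S i ∨ S' i = (S i)⁻¹) :
    NielsenEquiv S S' := by
  suffices ∀ s : Finset (Fin r), NielsenEquiv S (s.piecewise S' S) by
    simpa using this Finset.univ
  intro s
  induction s using Finset.induction_on with
  | empty => simpa using refl S
  | insert i s his ih =>
    rw [Finset.piecewise_insert]
    have hi : s.piecewise S' S i = S i := Finset.piecewise_eq_of_notMem s S' S his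
    refine ih.trans ?_
    rcases h i with h | h
    · simpa [h, ← hi] using refl _
    · simpa [h, ← hi] using update_inv (s.piecewise S' S) i (S i)

theorem comp_perm (S : Fin r → G) (σ : Equiv.Perm (Fin r)) : NielsenEquiv S (S ∘ σ) := by
  induction σ using Equiv.Perm.swap_induction_on' with
  | one => exact refl S
  | mul_swap σ i j hij ih =>
    refine ih.trans (of_move (.inr (.inl ⟨i, j, hij, by simp, by simp, fun k hki hkj => ?_⟩)))
    simp [Equiv.swap_apply_of_ne_of_ne hki hkj]

theorem exists_forall_le_mul {M : Type*} [AddCommMonoid M] [LinearOrder M]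
    [IsOrderedCancelAddMonoid M] [WellFoundedLT M] (f : G → M) (hf : ∀ g, f g⁻¹ = f g)
    (S : Fin r → G) :
    ∃ U, NielsenEquiv S U ∧ ∀ i j, j ≠ i → ∀ v w, (v = U j ∨ v = (U j)⁻¹) →
      (w = U i ∨ w = (U i)⁻¹) → f w ≤ f (v * w) := by
  obtain ⟨U, hSU, hmin⟩ := exists_minimalFor_of_wellFoundedLT (NielsenEquiv S)
    (fun U => ∑ k, f (U k)) ⟨S, refl S⟩
  refine ⟨U, hSU, fun i j hji v w hv hw => ?_⟩
  by_contra! hlt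
  have hfw : f w = f (U i) := by
    rcases hw with rfl | rfl
    · rfl
    · exact hf _
  have hsum : ∑ k, f (Function.update U i (v * w) k) < ∑ k, f (U k) := by
    refine Finset.sum_lt_sum (fun k _ => ?_) ⟨i, Finset.mem_univ i, by simpa [← hfw] using hlt⟩
    obtain rfl | hki := eq_or_ne k i
    · simpa [← hfw] using hlt.le
    · simp [hki]
  exact hsum.not_ge (hmin (hSU.trans (update_mul U hji hv hw)) hsum.le)

end NielsenEquiv

end Moves

section CommonPrefix

variable {β : Type*} [DecidableEq β]

/-- The length of the longest common prefix of two lists. -/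
def commonPrefixLength : List β → List β → ℕ
  | a :: s, b :: t => if a = b then commonPrefixLength s t + 1 else 0
  | _, _ => 0

theorem le_commonPrefixLength_iff {s t : List β} {n : ℕ} :
    n ≤ commonPrefixLength s t ↔ n ≤ s.length ∧ n ≤ t.length ∧ s.take n = t.take n := by
  induction s generalizing t n with
  | nil => simp +contextual [commonPrefixLength]
  | cons a s ih =>
    cases t with
    | nil => simp +contextual [commonPrefixLength]
    | cons b t =>
      cases n with
      | zero => simp
      | succ n =>
        by_cases hab : a = b <;> simp [commonPrefixLength, hab, ih]

theorem commonPrefixLength_comm (s t : List β) :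
    commonPrefixLength s t = commonPrefixLength t s :=
  eq_of_forall_le_iff fun n => by
    simp only [le_commonPrefixLength_iff, and_left_comm, eq_comm]

theorem min_commonPrefixLength_le (s t u : List β) :
    min (commonPrefixLength s t) (commonPrefixLength t u) ≤ commonPrefixLength s u := by
  obtain ⟨hs, -, hst⟩ := le_commonPrefixLength_iff.1
    (min_le_left (commonPrefixLength s t) (commonPrefixLength t u))
  obtain ⟨-, hu, htu⟩ := le_commonPrefixLength_iff.1
    (min_le_right (commonPrefixLength s t) (commonPrefixLength t u))
  exact le_commonPrefixLength_iff.2 ⟨hs, hu, hst.trans htu⟩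

theorem exists_eq_append_commonPrefixLength (s t : List β) :
    ∃ c s' t', s = c ++ s' ∧ t = c ++ t' ∧ c.length = commonPrefixLength s t ∧
      ∀ x ∈ s'.head?, ∀ y ∈ t'.head?, x ≠ y := by
  induction s generalizing t with
  | nil => exact ⟨[], [], t, by simp [commonPrefixLength]⟩
  | cons a s ih =>
    cases t with
    | nil => exact ⟨[], a :: s, [], by simp [commonPrefixLength]⟩
    | cons b t =>
      by_cases hab : a = b
      · obtain ⟨c, s', t', rfl, rfl, hc, hne⟩ := ih t
        exact ⟨a :: c, s', t', rfl, by simp [hab], by simp [commonPrefixLength, hab, hc], hne⟩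
      · exact ⟨[], a :: s, b :: t, by simp [commonPrefixLength, hab]⟩

end CommonPrefix

section GromovProduct

open FreeGroup

variable {α : Type*}

theorem isReduced_invRev {L : List (α × Bool)} (hL : IsReduced L) : IsReduced (invRev L) := by
  classical
  exact .of_reduce_eq (by rw [reduce_invRev, hL.reduce_eq])

theorem isReduced_invRev_append {s t : List (α × Bool)} (hs : IsReduced s) (ht : IsReduced t)
    (hne : ∀ x ∈ s.head?, ∀ y ∈ t.head?, x ≠ y) : IsReduced (invRev s ++ t) := by
  refine List.isChain_append.2 ⟨isReduced_invRev hs, ht, ?_⟩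
  rintro ⟨a, b⟩ hx ⟨a', b'⟩ hy rfl
  have hx' : (a, !b) ∈ s.head? := by
    simp only [invRev, List.getLast?_reverse, List.head?_map, Option.mem_def,
      Option.map_eq_some_iff, Prod.exists, Prod.mk.injEq] at hx
    obtain ⟨a, b, hs, rfl, rfl⟩ := hx
    simpa using hs
  have := hne _ hx' _ hy
  simpa [eq_comm] using this

variable [DecidableEq α]

/-- The Gromov product of `g` and `h` based at `1` in the Cayley tree of the free group. The number
of letters cancelled against each other in the product `g * h` is `gromovProduct g⁻¹ h`. -/
def gromovProduct (g h : FreeGroup α) : ℕ :=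
  commonPrefixLength g.toWord h.toWord

theorem gromovProduct_comm (g h : FreeGroup α) : gromovProduct g h = gromovProduct h g :=
  commonPrefixLength_comm _ _

theorem min_gromovProduct_le (g h k : FreeGroup α) :
    min (gromovProduct g h) (gromovProduct h k) ≤ gromovProduct g k :=
  min_commonPrefixLength_le _ _ _

theorem gromovProduct_eq_of_lt {g h k : FreeGroup α}
    (hlt : gromovProduct g h < gromovProduct h k) : gromovProduct g k = gromovProduct g h := by
  have h₁ := min_gromovProduct_le g h k
  have h₂ := min_gromovProduct_le g k h
  rw [gromovProduct_comm k h] at h₂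
  omega

theorem exists_toWord_inv_mul_eq_append (g h : FreeGroup α) :
    ∃ c s t, g.toWord = c ++ s ∧ h.toWord = c ++ t ∧ (g⁻¹ * h).toWord = invRev s ++ t ∧
      c.length = gromovProduct g h := by
  obtain ⟨c, s, t, hg, hh, hc, hne⟩ := exists_eq_append_commonPrefixLength g.toWord h.toWord
  refine ⟨c, s, t, hg, hh, ?_, hc⟩
  have hs : IsReduced s := (isReduced_toWord (x := g)).infix ⟨c, [], by simp [hg]⟩
  have ht : IsReduced t := (isReduced_toWord (x := h)).infix ⟨c, [], by simp [hh]⟩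
  have hgh : g⁻¹ * h = mk (invRev s ++ t) := by
    have hg_mk : g = mk c * mk s := by rw [mul_mk, ← hg, mk_toWord]
    have hh_mk : h = mk c * mk t := by rw [mul_mk, ← hh, mk_toWord]
    rw [← mul_mk, ← inv_mk, hg_mk, hh_mk]
    group
  rw [hgh, toWord_mk, (isReduced_invRev_append hs ht hne).reduce_eq]

theorem norm_inv_mul_add_gromovProduct (g h : FreeGroup α) :
    (g⁻¹ * h).norm + 2 * gromovProduct g h = g.norm + h.norm := by
  obtain ⟨c, s, t, hg, hh, hgh, hc⟩ := exists_toWord_inv_mul_eq_append g h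
  simp only [FreeGroup.norm, hg, hh, hgh, ← hc, List.length_append, invRev_length]
  ring

theorem norm_mul_add_gromovProduct (g h : FreeGroup α) :
    (g * h).norm + 2 * gromovProduct g⁻¹ h = g.norm + h.norm := by
  simpa using norm_inv_mul_add_gromovProduct g⁻¹ h

theorem gromovProduct_mul_add_gromovProduct (g h : FreeGroup α) :
    gromovProduct g (g * h) + gromovProduct g⁻¹ h = g.norm := by
  have h₁ := norm_inv_mul_add_gromovProduct g (g * h)
  have h₂ := norm_mul_add_gromovProduct g h
  rw [inv_mul_cancel_left] at h₁
  omega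

theorem norm_lt_norm_mul_self {g : FreeGroup α} (hg : g ≠ 1) : g.norm < (g * g).norm := by
  set c := reduceCyclically.conjugator g.toWord
  set z := reduceCyclically g.toWord
  have hg_word : g.toWord = c ++ z ++ invRev c :=
    (reduceCyclically.conj_conjugator_reduceCyclically g.toWord).symm
  have hgg_word : (g * g).toWord = c ++ (z ++ z) ++ invRev c := by
    rw [toWord_mul]
    simpa using reduceCyclically.reduce_flatten_replicate_succ (isReduced_toWord (x := g)) 1
  have hz : z ≠ [] := by
    intro hz
    refine hg ?_
    rw [← mk_toWord (x := g), hg_word, hz, List.append_nil, ← mul_mk, ← inv_mk, mul_inv_cancel]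
  have := List.length_pos_iff.2 hz
  simp only [FreeGroup.norm, hg_word, hgg_word, List.length_append]
  omega

end GromovProduct

section NielsenReduced

open FreeGroup

theorem exists_isChain_prod_eq_of_mem_closure {G : Type*} [Group G] {V : Set G}
    (hV : ∀ v ∈ V, v⁻¹ ∈ V) {g : G} (hg : g ∈ Subgroup.closure V) :
    ∃ l : List G, (∀ x ∈ l, x ∈ V) ∧ l.IsChain (fun x y => x * y ≠ 1) ∧ l.prod = g := by
  have cons_mul : ∀ v ∈ V, ∀ l : List G, (∀ x ∈ l, x ∈ V) → l.IsChain (fun x y => x * y ≠ 1) →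
      ∃ l' : List G, (∀ x ∈ l', x ∈ V) ∧ l'.IsChain (fun x y => x * y ≠ 1) ∧
        l'.prod = v * l.prod := by
    rintro v hv (_ | ⟨w, l⟩) hl hchain
    · exact ⟨[v], by simpa using hv, by simp, by simp⟩
    by_cases hvw : v * w = 1
    · exact ⟨l, fun x hx => hl x (by simp [hx]), hchain.tail, by simp [← mul_assoc, hvw]⟩
    · exact ⟨v :: w :: l, List.forall_mem_cons.2 ⟨hv, hl⟩,
        List.isChain_cons_cons.2 ⟨hvw, hchain⟩, by simp⟩
  induction hg using Subgroup.closure_induction_left with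
  | one => exact ⟨[], by simp, by simp, by simp⟩
  | mul_left v hv _ _ ih =>
    obtain ⟨l, hl, hchain, rfl⟩ := ih
    exact cons_mul v hv l hl hchain
  | inv_mul_cancel v hv _ _ ih =>
    obtain ⟨l, hl, hchain, rfl⟩ := ih
    exact cons_mul v⁻¹ (hV v hv) l hl hchain

variable {α : Type*} [DecidableEq α]

/-- Nielsen reduced subsets of a free group, meant for subsets closed under inversion. The last
field says that in a product `u * v * w` some letter of `v` survives; it is the usual condition
`‖u‖ - ‖v‖ + ‖w‖ < ‖u * v * w‖` expressed through the two cancellations. -/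
structure IsNielsenReduced (V : Set (FreeGroup α)) : Prop where
  one_notMem : 1 ∉ V
  norm_le_norm_mul_right : ∀ v ∈ V, ∀ w ∈ V, v * w ≠ 1 → v.norm ≤ (v * w).norm
  norm_le_norm_mul_left : ∀ v ∈ V, ∀ w ∈ V, v * w ≠ 1 → w.norm ≤ (v * w).norm
  gromovProduct_add_lt_norm : ∀ u ∈ V, ∀ v ∈ V, ∀ w ∈ V, u * v ≠ 1 → v * w ≠ 1 →
    gromovProduct u⁻¹ v + gromovProduct v⁻¹ w < v.norm

namespace IsNielsenReduced

variable {V : Set (FreeGroup α)}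

theorem norm_pos (hV : IsNielsenReduced V) {v : FreeGroup α} (hv : v ∈ V) : 0 < v.norm :=
  Nat.pos_of_ne_zero fun h => hV.one_notMem (norm_eq_zero.1 h ▸ hv)

theorem gromovProduct_inv_prod_cons (hV : IsNielsenReduced V) {u v : FreeGroup α}
    {l : List (FreeGroup α)} (hmem : ∀ x ∈ u :: v :: l, x ∈ V)
    (hchain : (u :: v :: l).IsChain (fun x y => x * y ≠ 1)) :
    gromovProduct u⁻¹ (v :: l).prod = gromovProduct u⁻¹ v := by
  induction l generalizing u v with
  | nil => simp
  | cons w l ih =>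
    obtain ⟨huv, hchain'⟩ := List.isChain_cons_cons.1 hchain
    have hvw := (List.isChain_cons_cons.1 hchain').1
    have hcancel := ih (fun x hx => hmem x (List.mem_cons_of_mem u hx)) hchain'
    have hlt := hV.gromovProduct_add_lt_norm u (hmem u (by simp)) v (hmem v (by simp))
      w (hmem w (by simp)) huv hvw
    have hsplit := gromovProduct_mul_add_gromovProduct v (w :: l).prod
    rw [List.prod_cons]
    exact gromovProduct_eq_of_lt (by omega)

theorem norm_le_norm_prod_cons (hV : IsNielsenReduced V) {v : FreeGroup α}
    {l : List (FreeGroup α)} (hmem : ∀ x ∈ v :: l, x ∈ V)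
    (hchain : (v :: l).IsChain (fun x y => x * y ≠ 1)) : v.norm ≤ (v :: l).prod.norm := by
  induction l generalizing v with
  | nil => simp
  | cons w l ih =>
    obtain ⟨hvw, hchain'⟩ := List.isChain_cons_cons.1 hchain
    have hw := ih (fun x hx => hmem x (List.mem_cons_of_mem v hx)) hchain'
    have hcancel := hV.gromovProduct_inv_prod_cons hmem hchain
    have hvle := hV.norm_le_norm_mul_right v (hmem v (by simp)) w (hmem w (by simp)) hvw
    have hvw_norm := norm_mul_add_gromovProduct v w
    have hprod_norm := norm_mul_add_gromovProduct v (w :: l).prod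
    rw [List.prod_cons]
    omega

theorem one_lt_norm_prod_cons_cons (hV : IsNielsenReduced V) {v w : FreeGroup α}
    {l : List (FreeGroup α)} (hmem : ∀ x ∈ v :: w :: l, x ∈ V)
    (hchain : (v :: w :: l).IsChain (fun x y => x * y ≠ 1)) :
    1 < (v :: w :: l).prod.norm := by
  obtain ⟨hvw, hchain'⟩ := List.isChain_cons_cons.1 hchain
  have hv := hmem v (by simp)
  have hw := hmem w (by simp)
  have hcancel := hV.gromovProduct_inv_prod_cons hmem hchain
  have hw_le := hV.norm_le_norm_prod_cons
    (fun x hx => hmem x (List.mem_cons_of_mem v hx)) hchain'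
  have hw_le_mul := hV.norm_le_norm_mul_left v hv w hw hvw
  have hv_le_mul := hV.norm_le_norm_mul_right v hv w hw hvw
  have hvw_norm := norm_mul_add_gromovProduct v w
  have hprod_norm := norm_mul_add_gromovProduct v (w :: l).prod
  have hv_pos := hV.norm_pos hv
  have hw_pos := hV.norm_pos hw
  rw [List.prod_cons]
  omega

theorem mem_of_norm_eq_one (hV : IsNielsenReduced V) (hinv : ∀ v ∈ V, v⁻¹ ∈ V)
    {g : FreeGroup α} (hg : g ∈ Subgroup.closure V) (hg_norm : g.norm = 1) : g ∈ V := by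
  obtain ⟨l, hmem, hchain, rfl⟩ := exists_isChain_prod_eq_of_mem_closure hinv hg
  match l with
  | [] => simp at hg_norm
  | [v] => simpa using hmem
  | v :: w :: l => exact absurd hg_norm (hV.one_lt_norm_prod_cons_cons hmem hchain).ne'

end IsNielsenReduced

end NielsenReduced

section LexRank

variable {β : Type*} [Fintype β]

/-- The number whose digits are the letters of a word, the first letter being the most significant:
on words of equal length it is an injective code of the lexicographic order. The base exceeds the
number of letters by two so that it is at least two for every alphabet. -/
noncomputable def lexRank (L : List β) : ℕ :=
  Nat.ofDigits (Fintype.card β + 2) (L.map fun x => (Fintype.equivFin β x : ℕ)).reverse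

theorem lexRank_append (L M : List β) :
    lexRank (L ++ M) = lexRank L * (Fintype.card β + 2) ^ M.length + lexRank M := by
  simp only [lexRank, List.map_append, List.reverse_append, Nat.ofDigits_append,
    List.length_reverse, List.length_map]
  ring

theorem digits_lexRank_lt (L : List β) :
    ∀ d ∈ (L.map fun x => (Fintype.equivFin β x : ℕ)).reverse, d < Fintype.card β + 2 := by
  simp only [List.mem_reverse, List.mem_map, forall_exists_index, and_imp]
  rintro _ x - rfl
  exact Nat.lt_add_right 2 (Fintype.equivFin β x).isLt

theorem lexRank_lt (L : List β) : lexRank L < (Fintype.card β + 2) ^ L.length := by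
  simpa [lexRank] using Nat.ofDigits_lt_base_pow_length' (digits_lexRank_lt L)

theorem eq_of_lexRank_eq {L M : List β} (hlen : L.length = M.length)
    (h : lexRank L = lexRank M) : L = M := by
  have hdigits := Nat.ofDigits_inj_of_len_eq (by omega) (by simpa using hlen)
    (digits_lexRank_lt L) (digits_lexRank_lt M) h
  exact List.map_injective_iff.2 (Fin.val_injective.comp (Fintype.equivFin β).injective)
    (List.reverse_injective hdigits)

end LexRank

section Complexity

open FreeGroup

/-- The first half of the reduced word of `g`, without its middle letter if the length is odd. -/
def initialHalf {α : Type*} [DecidableEq α] (g : FreeGroup α) : List (α × Bool) :=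
  g.toWord.take (g.norm / 2)

theorem eq_one_of_initialHalf_inv_eq {α : Type*} [DecidableEq α] {g : FreeGroup α}
    (heven : Even g.norm) (h : initialHalf g⁻¹ = initialHalf g) : g = 1 := by
  by_contra hg
  have hle : g.norm / 2 ≤ gromovProduct g⁻¹ g := by
    rw [initialHalf, initialHalf, norm_inv_eq] at h
    refine le_commonPrefixLength_iff.2 ⟨?_, Nat.div_le_self _ _, h⟩
    exact (Nat.div_le_self _ _).trans_eq norm_inv_eq.symm
  have hlt := norm_lt_norm_mul_self hg
  have hnorm := norm_mul_add_gromovProduct g g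
  have := Nat.two_mul_div_two_of_even heven
  omega

variable {α : Type*} [Fintype α]

/-- The tie-breaking rank of a word, made invariant under passing to the formal inverse. -/
noncomputable def symmLexRank (L : List (α × Bool)) : ℕ :=
  lexRank L + lexRank (invRev L)

theorem symmLexRank_invRev (L : List (α × Bool)) : symmLexRank (invRev L) = symmLexRank L := by
  rw [symmLexRank, symmLexRank, invRev_invRev, add_comm]

theorem symmLexRank_append_lt_of_lexRank_lt {a b d : List (α × Bool)}
    (hlen : a.length = b.length) (hd : b.length ≤ d.length) (hlt : lexRank a < lexRank b) :
    symmLexRank (a ++ d) < symmLexRank (b ++ d) := by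
  simp only [symmLexRank, invRev_append, lexRank_append, invRev_length, hlen]
  set B := Fintype.card (α × Bool) + 2
  have hfst : lexRank a * B ^ d.length + B ^ d.length ≤ lexRank b * B ^ d.length := by
    rw [← Nat.succ_mul]
    exact Nat.mul_le_mul_right _ hlt
  have hsnd : lexRank (invRev a) < B ^ d.length :=
    calc lexRank (invRev a) < B ^ (invRev a).length := lexRank_lt _
      _ = B ^ b.length := by rw [invRev_length, hlen]
      _ ≤ B ^ d.length := Nat.pow_le_pow_right (by omega) hd
  omega

variable [DecidableEq α]

/-- The well-founded measure decreased by Nielsen reduction: length first, ties being broken by the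
lexicographic ranks of the reduced words of `g` and `g⁻¹`. -/
noncomputable def complexity (g : FreeGroup α) : ℕ ×ₗ ℕ :=
  toLex (g.norm, symmLexRank g.toWord)

theorem complexity_inv (g : FreeGroup α) : complexity g⁻¹ = complexity g := by
  rw [complexity, complexity, norm_inv_eq, toWord_inv, symmLexRank_invRev]

theorem norm_le_of_complexity_le {g h : FreeGroup α} (hle : complexity g ≤ complexity h) :
    g.norm ≤ h.norm :=
  Prod.Lex.monotone_fst _ _ hle

theorem complexity_le_complexity_mul_self (g : FreeGroup α) :
    complexity g ≤ complexity (g * g) := by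
  obtain rfl | hg := eq_or_ne g 1
  · rw [mul_one]
  · exact Prod.Lex.toLex_le_toLex.2 (.inl (norm_lt_norm_mul_self hg))

theorem lexRank_initialHalf_inv_le {v w : FreeGroup α} (hv : v.norm = 2 * gromovProduct v⁻¹ w)
    (hvw : v.norm ≤ w.norm) (hle : complexity w ≤ complexity (v * w)) :
    lexRank (initialHalf v⁻¹) ≤ lexRank (initialHalf v) := by
  obtain ⟨c, s, d, hv_inv, hw, hmul, hc⟩ := exists_toWord_inv_mul_eq_append v⁻¹ w
  rw [inv_inv] at hmul
  have hv_word : v.toWord = invRev s ++ invRev c := by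
    rw [← inv_inv v, toWord_inv, hv_inv, invRev_append]
  have hs : s.length = c.length := by
    have : v.norm = s.length + c.length := by simp [FreeGroup.norm, hv_word]
    omega
  have hd : c.length ≤ d.length := by
    have : w.norm = c.length + d.length := by simp [FreeGroup.norm, hw]
    omega
  have hnorm : (v * w).norm = w.norm := by simp [FreeGroup.norm, hmul, hw, hs]
  have hhalf : initialHalf v = invRev s := by
    rw [initialHalf, hv_word, List.take_left' (by rw [invRev_length]; omega)]
  have hhalf_inv : initialHalf v⁻¹ = c := by
    rw [initialHalf, hv_inv, norm_inv_eq, List.take_left' (by omega)]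
  rw [hhalf, hhalf_inv]
  by_contra! hlt
  -- Passing from `w` to `v * w` replaces the prefix `c` of the word by `invRev s`, of equal length.
  refine hle.not_gt (Prod.Lex.toLex_lt_toLex.2 (.inr ⟨hnorm, ?_⟩))
  simpa only [hmul, hw] using
    symmLexRank_append_lt_of_lexRank_lt (by rw [invRev_length, hs]) hd hlt

theorem isNielsenReduced_of_forall_complexity_le {V : Set (FreeGroup α)} (hone : 1 ∉ V)
    (hinv : ∀ v ∈ V, v⁻¹ ∈ V)
    (hle : ∀ v ∈ V, ∀ w ∈ V, v * w ≠ 1 → complexity w ≤ complexity (v * w)) :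
    IsNielsenReduced V := by
  have hinv_mul {v w : FreeGroup α} (h : v * w ≠ 1) : w⁻¹ * v⁻¹ ≠ 1 := by
    rwa [← mul_inv_rev, inv_ne_one]
  have hleft : ∀ v ∈ V, ∀ w ∈ V, v * w ≠ 1 → w.norm ≤ (v * w).norm :=
    fun v hv w hw hvw => norm_le_of_complexity_le (hle v hv w hw hvw)
  have hright : ∀ v ∈ V, ∀ w ∈ V, v * w ≠ 1 → v.norm ≤ (v * w).norm := by
    intro v hv w hw hvw
    have := hleft w⁻¹ (hinv w hw) v⁻¹ (hinv v hv) (hinv_mul hvw)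
    rwa [← mul_inv_rev, norm_inv_eq, norm_inv_eq] at this
  refine ⟨hone, hright, hleft, fun u hu v hv w hw huv hvw => ?_⟩
  by_contra! hcon
  -- Each neighbour cancels at most half of `v`, so here each of them cancels exactly half.
  have huv_norm := norm_mul_add_gromovProduct u v
  have hvw_norm := norm_mul_add_gromovProduct v w
  have hu_le := hright u hu v hv huv
  have hv_le := hleft u hu v hv huv
  have hv_le' := hright v hv w hw hvw
  have hw_le := hleft v hv w hw hvw
  have hrank_le := lexRank_initialHalf_inv_le (v := v) (w := w) (by omega) (by omega)
    (hle v hv w hw hvw)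
  have hrank_ge := lexRank_initialHalf_inv_le (v := v⁻¹) (w := u⁻¹)
    (by rw [inv_inv, gromovProduct_comm, norm_inv_eq]; omega)
    (by rw [norm_inv_eq, norm_inv_eq]; omega)
    (hle v⁻¹ (hinv v hv) u⁻¹ (hinv u hu) (hinv_mul huv))
  rw [inv_inv] at hrank_ge
  have hhalf : initialHalf v⁻¹ = initialHalf v := by
    refine eq_of_lexRank_eq ?_ (hrank_le.antisymm hrank_ge)
    simp [initialHalf]
  have hv_one : v = 1 := eq_one_of_initialHalf_inv_eq ⟨gromovProduct v⁻¹ w, by omega⟩ hhalf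
  exact hone (hv_one ▸ hv)

end Complexity

section SignedEntries

variable {G : Type*} [Group G] {r : ℕ}

/-- The set of nontrivial entries of a tuple together with their inverses. -/
def signedEntries (U : Fin r → G) : Set G :=
  {g | g ≠ 1 ∧ ∃ j, g = U j ∨ g = (U j)⁻¹}

theorem inv_mem_signedEntries {U : Fin r → G} {g : G} (hg : g ∈ signedEntries U) :
    g⁻¹ ∈ signedEntries U := by
  obtain ⟨hne, j, rfl | rfl⟩ := hg
  · exact ⟨inv_ne_one.2 hne, j, .inr rfl⟩
  · exact ⟨inv_ne_one.2 hne, j, .inl (inv_inv _)⟩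

theorem range_subset_closure_signedEntries (U : Fin r → G) :
    Set.range U ⊆ Subgroup.closure (signedEntries U) := by
  rintro _ ⟨j, rfl⟩
  by_cases hj : U j = 1
  · simp [hj]
  · exact Subgroup.subset_closure ⟨hj, j, .inl rfl⟩

theorem isNielsenReduced_signedEntries {α : Type*} [Fintype α] [DecidableEq α]
    {U : Fin r → FreeGroup α}
    (hU : ∀ i j, j ≠ i → ∀ v w, (v = U j ∨ v = (U j)⁻¹) → (w = U i ∨ w = (U i)⁻¹) →
      complexity w ≤ complexity (v * w)) :
    IsNielsenReduced (signedEntries U) := by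
  refine isNielsenReduced_of_forall_complexity_le (fun h => h.1 rfl)
    (fun _ => inv_mem_signedEntries) ?_
  rintro v ⟨-, j, hv⟩ w ⟨-, i, hw⟩ hvw
  obtain rfl | hji := eq_or_ne j i
  · have : v = w := by
      rcases hv with rfl | rfl <;> rcases hw with rfl | rfl <;> simp_all
    exact this ▸ complexity_le_complexity_mul_self v
  · exact hU i j hji v w hv hw

theorem of_ne_inv_of {α : Type*} (a b : α) : FreeGroup.of a ≠ (FreeGroup.of b)⁻¹ := by
  classical
  intro h
  simpa [FreeGroup.invRev] using congrArg FreeGroup.toWord h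

theorem nielsenEquiv_of_of_forall_mem_signedEntries {U : Fin r → FreeGroup (Fin r)}
    (hU : ∀ a, FreeGroup.of a ∈ signedEntries U) : NielsenEquiv U FreeGroup.of := by
  choose σ hσ using fun a => (hU a).2
  have hσ_inj : Function.Injective σ := by
    intro a b hab
    have ha := hσ a
    have hb := hσ b
    rw [← hab] at hb
    have : FreeGroup.of a = FreeGroup.of b ∨ FreeGroup.of a = (FreeGroup.of b)⁻¹ := by
      rcases ha with ha | ha <;> rcases hb with hb | hb <;> simp [ha, hb]
    exact FreeGroup.of_injective (this.resolve_right (of_ne_inv_of a b))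
  let e : Equiv.Perm (Fin r) := .ofBijective σ (Finite.injective_iff_bijective.1 hσ_inj)
  exact (NielsenEquiv.comp_perm U e).trans (.of_forall_eq_or_eq_inv hσ)

theorem nielsenEquiv_of_of_closure_range_eq_top {T : Fin r → FreeGroup (Fin r)}
    (hT : Subgroup.closure (Set.range T) = ⊤) : NielsenEquiv T FreeGroup.of := by
  obtain ⟨U, hTU, hU⟩ := NielsenEquiv.exists_forall_le_mul complexity complexity_inv T
  have hclosure : Subgroup.closure (signedEntries U) = ⊤ := by
    rw [eq_top_iff, ← hT, hTU.closure_range_eq, Subgroup.closure_le]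
    exact range_subset_closure_signedEntries U
  have hmem (a : Fin r) : FreeGroup.of a ∈ signedEntries U :=
    (isNielsenReduced_signedEntries hU).mem_of_norm_eq_one (fun _ => inv_mem_signedEntries)
      (hclosure ▸ Subgroup.mem_top _) (FreeGroup.norm_of a)
  exact hTU.trans (nielsenEquiv_of_of_forall_mem_signedEntries hmem)

end SignedEntries

theorem nielsenEquiv_iff_exists_freeBasis_general {G : Type*} [Group G] {r : ℕ}
    (S S' : Fin r → G) :
    NielsenEquiv S S' ↔
      ∃ T : Fin r → FreeGroup (Fin r),
        Function.Bijective (FreeGroup.lift T) ∧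
        ∀ i, S i = FreeGroup.lift S' (T i) := by
  constructor
  · intro h
    obtain ⟨φ, hφ⟩ := h.exists_mulEquiv
    refine ⟨φ ∘ FreeGroup.of, ?_, fun i => ?_⟩
    · have hlift : FreeGroup.lift (φ ∘ FreeGroup.of) = (φ : FreeGroup (Fin r) →* _) := by
        ext; simp
      exact hlift ▸ φ.bijective
    · simpa using DFunLike.congr_fun hφ (FreeGroup.of i)
  · rintro ⟨T, hT, hS⟩
    have hT_of : NielsenEquiv T FreeGroup.of :=
      nielsenEquiv_of_of_closure_range_eq_top
        (FreeGroup.lift_surjective_iff_closure_range_eq_top.1 hT.surjective)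
    have hS_eq : S = FreeGroup.lift S' ∘ T := funext hS
    have hS'_eq : FreeGroup.lift S' ∘ FreeGroup.of = S' := by ext; simp
    simpa only [← hS_eq, hS'_eq] using hT_of.map (FreeGroup.lift S')

/-- Two generating `r`-tuples `S`, `S'` of a group `G` are Nielsen equivalent if and only
if there is a free basis `T` of the free group on `r` generators (i.e. a tuple whose
induced endomorphism of the free group is an isomorphism) with `S i = φ_{S'}(T i)` for
all `i`, where `φ_{S'}` is the homomorphism sending the `i`-th free generator to `S' i`. -/
theorem nielsenEquiv_iff_exists_freeBasis {G : Type*} [Group G] {r : ℕ}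
    (S S' : Fin r → G)
    (hS : Subgroup.closure (Set.range S) = ⊤)
    (hS' : Subgroup.closure (Set.range S') = ⊤) :
    NielsenEquiv S S' ↔
      ∃ T : Fin r → FreeGroup (Fin r),
        Function.Bijective (FreeGroup.lift T) ∧
        ∀ i, S i = FreeGroup.lift S' (T i) :=
  nielsenEquiv_iff_exists_freeBasis_general S S'
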